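/- Let u be a positive solution of div(|x|^{-2a}∇u) + |x|^{-bp} u^{p-1} = 0 in ℝ^d, with a,b satisfying the admissibility conditions, and let 𝐩 := (n-1) w^{-2/(n-2)} be the associated pressure function. Then 𝐩 satisfies 𝓛𝐩 = (2(n-1)²/(n-2)) 𝐩^{-1} + (n/2) |D𝐩|² 𝐩^{-1} on (0,∞) × S^{d-1}. -/

import Mathlib

/-!
The proof is a chain rule computation, organised so that all second-order operators are read off
from the Euclidean gradient and Hessian. At a point `x ≠ 0`,
`𝓛V = tr D²V + (α² - 1) |x|⁻² D²V(x, x) + (α²(n-1) - (d-1)) |x|⁻² ∇V·x` (`cylL_eq`) and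
`|DV|² = |∇V|² + (α² - 1) |x|⁻² (∇V·x)²` (`cylGradSq_eq`).

*Equation for `w`.* With `Φ(x) = |x|^(α-1) x` one has `u = w ∘ Φ`. Differentiating twice gives
`tr D²u` in terms of `D²w` and `Dw` at `Φ(x)` (`trace_hess_comp_cylMap`). Inserting this in the
Caffarelli-Kohn-Nirenberg equation, in the nondivergence form of `divg_weighted`, and using
`α(n-2) = 2(a_c-a)` and `bp = 2a - 2(α-1)`, yields `𝓛w + w^(p-1) = 0` (`cylL_eq_of_CKN`).

*Equation for the pressure.* For `𝐩 = (n-1) w^q`, `q = -2/(n-2)`, the chain rule expresses `𝓛𝐩` and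
`|D𝐩|²` by `𝓛w` and `|Dw|²`; since `p - 1 = (n+2)/(n-2)`, the exponents match
(`cylL_pressure_of_cylL`).

*The endpoint `b = a + 1`.* There `α = 0`, so `u` is `0`-homogeneous away from the origin and attains
its minimum over `ℝ^d \ {0}` at a point of the unit sphere. At that point `∇u = 0` and `Δu ≥ 0`,
which contradicts the equation because the nonlinear term is positive: the endpoint case is vacuous
(`no_solution_of_alpha_zero`).
-/

open Real MeasureTheory Metric
open scoped RealInnerProductSpace

noncomputable section

/-- `ℝ^d` with the Euclidean structure. -/
abbrev Euc (d : ℕ) := EuclideanSpace ℝ (Fin d)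

/-- Divergence of a vector field on `ℝ^d`. -/
def divg {d : ℕ} (F : Euc d → Euc d) (x : Euc d) : ℝ :=
  ∑ i, ⟪fderiv ℝ F x (EuclideanSpace.single i 1), EuclideanSpace.single i 1⟫

/-- The critical parameter `a_c = (d-2)/2`. -/
def acrit (d : ℕ) : ℝ := ((d : ℝ) - 2) / 2

/-- The CKN exponent `p = 2d/(d-2+2(b-a))`. -/
def pCKN (d : ℕ) (a b : ℝ) : ℝ := 2 * d / ((d : ℝ) - 2 + 2 * (b - a))

/-- The auxiliary parameter `α = (1+a-b)(a_c-a)/(a_c-a+b)`. -/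
def alphaCKN (d : ℕ) (a b : ℝ) : ℝ := (1 + a - b) * (acrit d - a) / (acrit d - a + b)

/-- The intrinsic dimension `n = d/(1+a-b)`. -/
def nCKN (d : ℕ) (a b : ℝ) : ℝ := (d : ℝ) / (1 + a - b)

/-- The admissibility conditions on `a, b`:
`a ≤ b ≤ a+1` if `d ≥ 3`, `a < b ≤ a+1` if `d = 2`, and `a < a_c`. -/
def Admissible (d : ℕ) (a b : ℝ) : Prop :=
  ((3 ≤ d ∧ a ≤ b ∧ b ≤ a + 1) ∨ (d = 2 ∧ a < b ∧ b ≤ a + 1)) ∧ a < acrit d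

/-- `p ∈ (2, 2^*)` where `2^* = 2d/(d-2)` for `d ≥ 3` (and `2^* = +∞` for `d = 2`). -/
def PInCriticalRange (d : ℕ) (p : ℝ) : Prop :=
  2 < p ∧ (3 ≤ d → p < 2 * d / ((d : ℝ) - 2))

/-- `u` is a (classical, away from the origin) solution of
`div(|x|^{-2a} ∇u) + |x|^{-bp} u^{p-1} = 0` in `ℝ^d`. -/
def IsCKNSolution (d : ℕ) (a b p : ℝ) (u : Euc d → ℝ) : Prop :=
  ContDiffOn ℝ (⊤ : ℕ∞) u {(0 : Euc d)}ᶜ ∧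
    ∀ x : Euc d, x ≠ 0 →
      divg (fun y => (‖y‖ ^ (-(2 * a)) : ℝ) • gradient u y) x
        + ‖x‖ ^ (-(b * p)) * u x ^ (p - 1) = 0

/-- The explicit radial solution `𝒰`. -/
def UCKN (d : ℕ) (a b : ℝ) (x : Euc d) : ℝ :=
  ((d : ℝ) * (pCKN d a b - 2) * (acrit d - a) ^ 2 / (1 + a - b)) ^ (1 / (pCKN d a b - 2)) *
    (1 + ‖x‖ ^ ((pCKN d a b - 2) * (acrit d - a))) ^ (-2 / (pCKN d a b - 2))

/-- `u` coincides with `𝒰` up to the scaling invariance `u ↦ λ^{a_c-a} u(λ ·)`. -/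
def IsSolitonBubble (d : ℕ) (a b : ℝ) (u : Euc d → ℝ) : Prop :=
  ∃ lam : ℝ, 0 < lam ∧ ∀ x : Euc d, u x = lam ^ (acrit d - a) * UCKN d a b (lam • x)

/-- Membership in the local space `D^{a,b}_loc(ℝ^d)`. -/
def MemDLoc (d : ℕ) (a b p : ℝ) (u : Euc d → ℝ) : Prop :=
  ∀ R : ℝ, 0 < R →
    IntegrableOn (fun x : Euc d => |u x| ^ p * ‖x‖ ^ (-(b * p))) (ball 0 R) volume ∧
      IntegrableOn (fun x : Euc d => ‖x‖ ^ (-(2 * a)) * ‖gradient u x‖ ^ 2) (ball 0 R) volume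

/-- Membership in the energy space `D^{a,b}(ℝ^d)`. -/
def MemD (d : ℕ) (a b p : ℝ) (u : Euc d → ℝ) : Prop :=
  Integrable (fun x : Euc d => |u x| ^ p * ‖x‖ ^ (-(b * p))) volume ∧
    Integrable (fun x : Euc d => ‖x‖ ^ (-(2 * a)) * ‖gradient u x‖ ^ 2) volume

/- Cylinder `(0,∞) × S^{d-1}` objects.  A function on the cylinder is identified with a
function on `ℝ^d \ {0}` via `(r,θ) ↦ rθ`; the angular derivatives are expressed through
the standard Euclidean decomposition in spherical coordinates. -/

/-- Radial derivative `v'` (i.e. `∂_r`) in spherical coordinates. -/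
def rD {d : ℕ} (V : Euc d → ℝ) (x : Euc d) : ℝ := fderiv ℝ V x (‖x‖⁻¹ • x)

/-- Second radial derivative `v''`. -/
def rD2 {d : ℕ} (V : Euc d → ℝ) (x : Euc d) : ℝ := rD (rD V) x

/-- The Euclidean Laplacian on `ℝ^d`. -/
def eLap {d : ℕ} (V : Euc d → ℝ) (x : Euc d) : ℝ :=
  ∑ i, fderiv ℝ (fun y => fderiv ℝ V y (EuclideanSpace.single i 1)) x (EuclideanSpace.single i 1)

/-- `Δ_θ V / r²`, via the decomposition `Δ = ∂_rr + (d-1)/r ∂_r + Δ_θ/r²`. -/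
def sphLapR2 {d : ℕ} (V : Euc d → ℝ) (x : Euc d) : ℝ :=
  eLap V x - rD2 V x - ((d : ℝ) - 1) / ‖x‖ * rD V x

/-- The operator `𝓛v = α² v'' + α²(n-1) v'/r + Δ_θ v/r²`. -/
def cylL {d : ℕ} (α n : ℝ) (V : Euc d → ℝ) (x : Euc d) : ℝ :=
  α ^ 2 * rD2 V x + α ^ 2 * (n - 1) / ‖x‖ * rD V x + sphLapR2 V x

/-- `∇_θ V / r`, realized as the tangential part of the Euclidean gradient. -/
def tGrad {d : ℕ} (V : Euc d → ℝ) (x : Euc d) : Euc d :=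
  gradient V x - rD V x • (‖x‖⁻¹ • x)

/-- `|Dv|² = α² |v'|² + |∇_θ v|²/r²`. -/
def cylGradSq {d : ℕ} (α : ℝ) (V : Euc d → ℝ) (x : Euc d) : ℝ :=
  α ^ 2 * rD V x ^ 2 + ‖tGrad V x‖ ^ 2

/-- `⟨Dv, Dq⟩ = α² v' q' + ∇_θ v · ∇_θ q / r²`. -/
def cylInnerD {d : ℕ} (α : ℝ) (V Q : Euc d → ℝ) (x : Euc d) : ℝ :=
  α ^ 2 * rD V x * rD Q x + ⟪tGrad V x, tGrad Q x⟫

/-- The Bochner quantity `𝐤[𝐩] = ½ 𝓛|D𝐩|² − ⟨D𝐩, D𝓛𝐩⟩ − (1/n)(𝓛𝐩)²`. -/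
def bochK {d : ℕ} (α n : ℝ) (V : Euc d → ℝ) (x : Euc d) : ℝ :=
  (1 / 2) * cylL α n (cylGradSq α V) x - cylInnerD α V (cylL α n V) x
    - (1 / n) * cylL α n V x ^ 2

/-- The divergence `D_i (φ D_i ψ)` of the field `φ Dψ`, expressed via the Leibniz rule
`D_i(φ D_i ψ) = ⟨Dφ, Dψ⟩ + φ 𝓛ψ`. -/
def cylDivFD {d : ℕ} (α n : ℝ) (φ ψ : Euc d → ℝ) (x : Euc d) : ℝ :=
  cylInnerD α φ ψ x + φ x * cylL α n ψ x

/-- Integral over the cylinder `(0,∞)×S^{d-1}` with respect to `dμ = r^{n-1} dr dθ`,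
i.e. the weighted integral `∫ f(x) |x|^{n-d} dx` on `ℝ^d`. -/
def cylIntegral {d : ℕ} (n : ℝ) (f : Euc d → ℝ) : ℝ :=
  ∫ x : Euc d, f x * ‖x‖ ^ (n - (d : ℝ))

/-- Integral over `(0,R)×S^{d-1}` with respect to `dμ = r^{n-1} dr dθ`. -/
def cylIntegralBall {d : ℕ} (n : ℝ) (R : ℝ) (f : Euc d → ℝ) : ℝ :=
  ∫ x in ball (0 : Euc d) R, f x * ‖x‖ ^ (n - (d : ℝ))

/-- `W` is the cylinder representation `w` of `u`, i.e. `u(r,θ) = w(r^α, θ)`. -/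
def IsCylinderRep {d : ℕ} (α : ℝ) (u W : Euc d → ℝ) : Prop :=
  ContDiffOn ℝ (⊤ : ℕ∞) W {(0 : Euc d)}ᶜ ∧
    ∀ x : Euc d, x ≠ 0 → u x = W ((‖x‖ ^ (α - 1) : ℝ) • x)

/-- The pressure function `𝐩 = (n-1) w^{-2/(n-2)}`. -/
def pressure {d : ℕ} (n : ℝ) (W : Euc d → ℝ) (x : Euc d) : ℝ :=
  (n - 1) * W x ^ (-(2 / (n - 2)))

/-- A nonnegative smooth function of the radial variable, compactly supported in `(0,∞)`. -/
def IsCutoff (η : ℝ → ℝ) : Prop :=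
  ContDiff ℝ (⊤ : ℕ∞) η ∧ HasCompactSupport η ∧ tsupport η ⊆ Set.Ioi 0 ∧ ∀ r : ℝ, 0 ≤ η r

/-! ### Coordinates, traces and powers of the norm -/

/-- The `i`-th vector of the standard basis of `ℝ^d`. -/
abbrev stdE {d : ℕ} (i : Fin d) : Euc d := EuclideanSpace.single i 1

/-- The Hessian of `V` at `x`, as a bilinear form: the Fréchet derivative of `fderiv ℝ V`. It is
meaningful only where `fderiv ℝ V` is differentiable. -/
abbrev hess {d : ℕ} (V : Euc d → ℝ) (x : Euc d) : Euc d →L[ℝ] Euc d →L[ℝ] ℝ :=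
  fderiv ℝ (fderiv ℝ V) x

lemma sum_coord_smul {d : ℕ} (x : Euc d) : ∑ i, x i • (stdE i : Euc d) = x := by
  ext j
  simp [Finset.sum_apply, Pi.single_apply]

lemma sum_coord_sq {d : ℕ} (x : Euc d) : ∑ i, x i ^ 2 = ‖x‖ ^ 2 := by
  rw [EuclideanSpace.norm_sq_eq]
  simp

lemma inner_stdE {d : ℕ} (x : Euc d) (i : Fin d) : ⟪x, (stdE i : Euc d)⟫ = x i := by
  simp [EuclideanSpace.inner_single_right]

lemma sum_apply_coord {d : ℕ} (L : Euc d →L[ℝ] ℝ) (x : Euc d) :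
    ∑ i, x i * L (stdE i) = L x := by
  conv_rhs => rw [← sum_coord_smul x]
  simp [map_sum]

/-- Trace of the pull-back of a bilinear form `H` by the rank-one perturbation
`v ↦ A v + B ⟨x, v⟩ x` of a homothety; this is the shape of the derivative of `cylMap`. -/
lemma trace_rank_one {d : ℕ} (H : Euc d →L[ℝ] Euc d →L[ℝ] ℝ) (x : Euc d) (A B : ℝ) :
    ∑ i, H (A • stdE i + (B * x i) • x) (A • stdE i + (B * x i) • x)
      = A ^ 2 * ∑ i, H (stdE i) (stdE i) + (2 * A * B + B ^ 2 * ‖x‖ ^ 2) * H x x := by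
  have h1 : ∑ i, x i * H x (stdE i) = H x x := sum_apply_coord (H x) x
  have h2 : ∑ i, x i * H (stdE i) x = H x x := sum_apply_coord (H.flip x) x
  have h3 : ∀ i, H (A • stdE i + (B * x i) • x) (A • stdE i + (B * x i) • x)
      = A ^ 2 * H (stdE i) (stdE i) + A * B * (x i * H x (stdE i))
        + A * B * (x i * H (stdE i) x) + B ^ 2 * H x x * x i ^ 2 := by
    intro i
    simp only [map_add, map_smul, add_apply, smul_apply,
      smul_eq_mul]
    ring
  simp_rw [h3, Finset.sum_add_distrib, ← Finset.mul_sum, h1, h2, sum_coord_sq]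
  ring

lemma hasFDerivAt_norm_rpow' {d : ℕ} (s : ℝ) {x : Euc d} (hx : x ≠ 0) :
    HasFDerivAt (fun y : Euc d => ‖y‖ ^ s) ((s * ‖x‖ ^ (s - 2)) • innerSL ℝ x) x := by
  have hr : 0 < ‖x‖ := norm_pos_iff.2 hx
  have h := ((hasStrictFDerivAt_norm_sq x).hasFDerivAt).rpow_const (p := s / 2)
    (Or.inl (by positivity))
  have h' : (fun y : Euc d => (‖y‖ ^ 2) ^ (s / 2)) = fun y => ‖y‖ ^ s := by
    funext y
    rw [← Real.rpow_natCast, ← Real.rpow_mul (norm_nonneg y)]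
    congr 1; push_cast; ring
  rw [h'] at h
  have h2 : (‖x‖ ^ 2) ^ (s / 2 - 1) = ‖x‖ ^ (s - 2) := by
    rw [← Real.rpow_natCast, ← Real.rpow_mul hr.le]
    congr 1; push_cast; ring
  rw [h2] at h
  refine h.congr_fderiv ?_
  ext v
  simp
  ring

/-! ### The operators of the cylinder in terms of gradient and Hessian -/

lemma ContDiffAt.hasFDerivAt_fderiv {d : ℕ} {V : Euc d → ℝ} {x : Euc d}
    (hV : ContDiffAt ℝ 2 V x) : HasFDerivAt (fderiv ℝ V) (hess V x) x :=
  ((hV.fderiv_right (m := 1) (by norm_num)).differentiableAt (by norm_num)).hasFDerivAt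

lemma eLap_eq {d : ℕ} {V : Euc d → ℝ} {x : Euc d} (hV : ContDiffAt ℝ 2 V x) :
    eLap V x = ∑ i, hess V x (stdE i) (stdE i) := by
  unfold eLap
  refine Finset.sum_congr rfl fun i _ => ?_
  rw [(hV.hasFDerivAt_fderiv.clm_apply (hasFDerivAt_const (stdE i : Euc d) x)).fderiv]
  simp

lemma rD_eq {d : ℕ} (V : Euc d → ℝ) (x : Euc d) : rD V x = ‖x‖⁻¹ * fderiv ℝ V x x := by
  simp [rD]

/-- No first-order term appears, because `y ↦ y / |y|` is constant in the radial direction. -/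
lemma rD2_eq {d : ℕ} {V : Euc d → ℝ} {x : Euc d} (hx : x ≠ 0) (hV : ContDiffAt ℝ 2 V x) :
    rD2 V x = (‖x‖⁻¹) ^ 2 * hess V x x x := by
  have hr : 0 < ‖x‖ := norm_pos_iff.2 hx
  have h1 := hV.hasFDerivAt_fderiv.clm_apply
    ((hasFDerivAt_norm_rpow' (-1) hx).smul (hasFDerivAt_id x))
  have h2 : rD V = fun y => fderiv ℝ V y (((fun y : Euc d => ‖y‖ ^ (-1 : ℝ)) • id) y) := by
    funext y
    simp [rD, Real.rpow_neg_one]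
  rw [rD2, rD, h2, h1.fderiv]
  have h3 : ‖x‖ ^ (-1 - 2 : ℝ) = (‖x‖⁻¹) ^ 3 := by
    rw [show (-1 - 2 : ℝ) = -((3 : ℕ) : ℝ) by norm_num, Real.rpow_neg hr.le, Real.rpow_natCast,
      inv_pow]
  simp only [h3, Real.rpow_neg_one, add_apply,
    ContinuousLinearMap.comp_apply, ContinuousLinearMap.flip_apply, map_add, map_smul, smul_eq_mul,
    smul_apply, ContinuousLinearMap.smulRight_apply, id, Pi.smul_apply',
    ContinuousLinearMap.id_apply, innerSL_apply_apply, real_inner_self_eq_norm_sq]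
  field_simp
  ring

lemma cylL_eq {d : ℕ} (α n : ℝ) {V : Euc d → ℝ} {x : Euc d} (hx : x ≠ 0)
    (hV : ContDiffAt ℝ 2 V x) :
    cylL α n V x = ∑ i, hess V x (stdE i) (stdE i)
      + (α ^ 2 - 1) * (‖x‖⁻¹) ^ 2 * hess V x x x
      + (α ^ 2 * (n - 1) - (d - 1)) * (‖x‖⁻¹) ^ 2 * fderiv ℝ V x x := by
  rw [cylL, sphLapR2, eLap_eq hV, rD2_eq hx hV, rD_eq]
  ring

lemma norm_gradient_sq {d : ℕ} (V : Euc d → ℝ) (x : Euc d) :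
    ‖gradient V x‖ ^ 2 = ∑ i, (fderiv ℝ V x (stdE i)) ^ 2 := by
  rw [← sum_coord_sq]
  refine Finset.sum_congr rfl fun i _ => ?_
  rw [← inner_stdE, gradient, InnerProductSpace.toDual_symm_apply]

lemma cylGradSq_eq {d : ℕ} (α : ℝ) (V : Euc d → ℝ) {x : Euc d} (hx : x ≠ 0) :
    cylGradSq α V x = ∑ i, (fderiv ℝ V x (stdE i)) ^ 2
      + (α ^ 2 - 1) * (‖x‖⁻¹) ^ 2 * (fderiv ℝ V x x) ^ 2 := by
  have hr : 0 < ‖x‖ := norm_pos_iff.2 hx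
  have hg : ⟪gradient V x, x⟫ = fderiv ℝ V x x := by
    rw [gradient, InnerProductSpace.toDual_symm_apply]
  rw [cylGradSq, tGrad, norm_sub_sq_real, norm_gradient_sq, inner_smul_right, inner_smul_right, hg,
    norm_smul, norm_smul, rD_eq, norm_inv, norm_norm, inv_mul_cancel₀ hr.ne', mul_one,
    Real.norm_eq_abs, sq_abs]
  ring

/-- Nondivergence form of `div(|x|^s ∇u)`. -/
lemma divg_weighted {d : ℕ} (s : ℝ) {u : Euc d → ℝ} {x : Euc d} (hx : x ≠ 0)
    (hu : ContDiffAt ℝ 2 u x) :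
    divg (fun y => (‖y‖ ^ s : ℝ) • gradient u y) x
      = ‖x‖ ^ s * ∑ i, hess u x (stdE i) (stdE i) + s * ‖x‖ ^ (s - 2) * fderiv ℝ u x x := by
  have hco : ∀ i : Fin d, HasFDerivAt (fun y => ‖y‖ ^ s * fderiv ℝ u y (stdE i))
      (‖x‖ ^ s • (hess u x).flip (stdE i)
        + fderiv ℝ u x (stdE i) • (s * ‖x‖ ^ (s - 2)) • innerSL ℝ x) x := by
    intro i
    have h1 := hu.hasFDerivAt_fderiv.clm_apply (hasFDerivAt_const (stdE i : Euc d) x)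
    refine ((hasFDerivAt_norm_rpow' s hx).mul h1).congr_fderiv ?_
    simp
  set F : Euc d → Euc d := fun y => (‖y‖ ^ s : ℝ) • gradient u y with hF
  have hFi : ∀ i y, F y i = ‖y‖ ^ s * fderiv ℝ u y (stdE i) := by
    intro i y
    rw [← inner_stdE, hF, inner_smul_left, gradient, InnerProductSpace.toDual_symm_apply]
    simp
  -- Differentiability of the field is checked on coordinates, where `gradient` unfolds to `fderiv`.
  have hFd : DifferentiableAt ℝ F x := by
    rw [differentiableAt_euclidean]
    intro i
    simp_rw [hFi]
    exact (hco i).differentiableAt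
  unfold divg
  have h' : ∀ i : Fin d, ⟪fderiv ℝ F x (stdE i), (stdE i : Euc d)⟫
      = ‖x‖ ^ s * hess u x (stdE i) (stdE i)
        + s * ‖x‖ ^ (s - 2) * (x i * fderiv ℝ u x (stdE i)) := by
    intro i
    have h1 := (EuclideanSpace.proj (𝕜 := ℝ) i).hasFDerivAt.comp x hFd.hasFDerivAt
    have h2 : (EuclideanSpace.proj (𝕜 := ℝ) i) ∘ F
        = fun y => ‖y‖ ^ s * fderiv ℝ u y (stdE i) := funext fun y => hFi i y
    rw [h2] at h1
    have h3 := congrArg (fun L : Euc d →L[ℝ] ℝ => L (stdE i)) (h1.unique (hco i))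
    rw [inner_stdE]
    refine Eq.trans h3 ?_
    rw [← inner_stdE x i]
    simp only [add_apply, smul_apply, ContinuousLinearMap.flip_apply, innerSL_apply_apply,
      smul_eq_mul]
    ring
  rw [Finset.sum_congr rfl fun i _ => h' i, Finset.sum_add_distrib, ← Finset.mul_sum,
    ← Finset.mul_sum, sum_apply_coord]

/-! ### The change of variables `r ↦ r^α` -/

/-- The map `rθ ↦ r^α θ`, written `x ↦ |x|^(α-1) x`; it sends `0` to `0`. -/
def cylMap {d : ℕ} (α : ℝ) (x : Euc d) : Euc d := (‖x‖ ^ (α - 1) : ℝ) • x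

lemma norm_cylMap {d : ℕ} (α : ℝ) {x : Euc d} (hx : x ≠ 0) : ‖cylMap α x‖ = ‖x‖ ^ α := by
  have hr : 0 < ‖x‖ := norm_pos_iff.2 hx
  rw [cylMap, norm_smul, Real.norm_of_nonneg (by positivity)]
  conv_lhs => rw [← Real.rpow_one ‖x‖, ← Real.rpow_mul hr.le, ← Real.rpow_add hr]
  congr 1; ring

lemma cylMap_ne_zero {d : ℕ} (α : ℝ) {x : Euc d} (hx : x ≠ 0) : cylMap α x ≠ 0 := by
  have hr : 0 < ‖x‖ := norm_pos_iff.2 hx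
  exact smul_ne_zero (by positivity) hx

lemma cylMap_inv {d : ℕ} {α : ℝ} (hα : α ≠ 0) {x : Euc d} (hx : x ≠ 0) :
    cylMap α (cylMap α⁻¹ x) = x := by
  have hr : 0 < ‖x‖ := norm_pos_iff.2 hx
  rw [cylMap, norm_cylMap _ hx, cylMap, smul_smul, ← Real.rpow_mul hr.le, ← Real.rpow_add hr]
  have : α⁻¹ * (α - 1) + (α⁻¹ - 1) = 0 := by field_simp; ring
  rw [this, Real.rpow_zero, one_smul]

lemma hasFDerivAt_cylMap {d : ℕ} (α : ℝ) {x : Euc d} (hx : x ≠ 0) :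
    HasFDerivAt (cylMap α) (‖x‖ ^ (α - 1) • ContinuousLinearMap.id ℝ (Euc d)
      + (((α - 1) * ‖x‖ ^ (α - 1 - 2)) • innerSL ℝ x).smulRight x) x :=
  (hasFDerivAt_norm_rpow' (α - 1) hx).smul (hasFDerivAt_id x)

lemma contDiffAt_of_punctured {d : ℕ} {V : Euc d → ℝ} (hV : ContDiffOn ℝ (⊤ : ℕ∞) V {(0 : Euc d)}ᶜ)
    {x : Euc d} (hx : x ≠ 0) : ContDiffAt ℝ 2 V x :=
  (hV.contDiffAt (isOpen_compl_singleton.mem_nhds hx)).of_le 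
    (WithTop.coe_le_coe.2 (le_top : (2 : ℕ∞) ≤ ⊤))

lemma fderiv_comp_cylMap {d : ℕ} {α : ℝ} {u W : Euc d → ℝ} (hW : IsCylinderRep α u W)
    {x : Euc d} (hx : x ≠ 0) (v : Euc d) :
    fderiv ℝ u x v = fderiv ℝ W (cylMap α x)
      (‖x‖ ^ (α - 1) • v + ((α - 1) * ‖x‖ ^ (α - 1 - 2) * ⟪x, v⟫) • x) := by
  have he : u =ᶠ[nhds x] W ∘ cylMap α := by
    filter_upwards [isOpen_compl_singleton.mem_nhds hx] with y hy using hW.2 y hy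
  have hd : HasFDerivAt W (fderiv ℝ W (cylMap α x)) (cylMap α x) :=
    ((contDiffAt_of_punctured hW.1 (cylMap_ne_zero α hx)).differentiableAt
      (by norm_num)).hasFDerivAt
  rw [he.fderiv_eq, (hd.comp x (hasFDerivAt_cylMap α hx)).fderiv]
  simp

/-- The Laplacian of `u = W ∘ Φ`, where `Φ = cylMap α`: the first-order term is `DW` applied to
`ΔΦ(x) = (α-1)(α+d-1) |x|^(α-3) x`. -/
lemma trace_hess_comp_cylMap {d : ℕ} {α : ℝ} {u W : Euc d → ℝ} (hW : IsCylinderRep α u W)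
    (hu : ContDiffOn ℝ (⊤ : ℕ∞) u {(0 : Euc d)}ᶜ) {x : Euc d} (hx : x ≠ 0) :
    ∑ i, hess u x (stdE i) (stdE i)
      = (‖x‖ ^ (α - 1)) ^ 2 * (∑ i, hess W (cylMap α x) (stdE i) (stdE i)
          + (α ^ 2 - 1) * (‖x‖⁻¹) ^ 2 * hess W (cylMap α x) x x)
        + (α - 1) * (α + d - 1) * (‖x‖⁻¹) ^ 2 * ‖x‖ ^ (α - 1)
          * fderiv ℝ W (cylMap α x) x := by
  have hr : 0 < ‖x‖ := norm_pos_iff.2 hx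
  set y := cylMap α x with hy
  set A := ‖x‖ ^ (α - 1) with hA
  have hB : ‖x‖ ^ (α - 1 - 2) = A * (‖x‖⁻¹) ^ 2 := by
    rw [Real.rpow_sub hr, Real.rpow_two, inv_pow, div_eq_mul_inv]
  have hC : ‖x‖ ^ (α - 1 - 2 - 2) = A * (‖x‖⁻¹) ^ 4 := by
    rw [Real.rpow_sub hr, Real.rpow_two, hB]; field_simp
  have hWd := (contDiffAt_of_punctured hW.1 (cylMap_ne_zero α hx)).hasFDerivAt_fderiv
  -- Second derivative of `W ∘ Φ` in the direction of each basis vector, before taking the trace.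
  have key : ∀ i : Fin d, hess u x (stdE i) (stdE i)
      = hess W y (A • stdE i + ((α - 1) * A * (‖x‖⁻¹) ^ 2 * x i) • x)
          (A • stdE i + ((α - 1) * A * (‖x‖⁻¹) ^ 2 * x i) • x)
        + 2 * ((α - 1) * A * (‖x‖⁻¹) ^ 2) * (x i * fderiv ℝ W y (stdE i))
        + (α - 1) * (α - 3) * A * (‖x‖⁻¹) ^ 4 * fderiv ℝ W y x * x i ^ 2
        + (α - 1) * A * (‖x‖⁻¹) ^ 2 * fderiv ℝ W y x := by
    intro i
    have hi : HasFDerivAt (fun z : Euc d => ⟪z, (stdE i : Euc d)⟫) (innerSL ℝ (stdE i : Euc d)) x := by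
      have := (innerSL ℝ (stdE i : Euc d)).hasFDerivAt (x := x)
      refine this.congr_of_eventuallyEq (Filter.Eventually.of_forall fun z => ?_)
      simp [real_inner_comm]
    have h1 := (hWd.comp x (hasFDerivAt_cylMap α hx)).clm_apply
      (((hasFDerivAt_norm_rpow' (α - 1) hx).smul_const (stdE i : Euc d)).add
        ((((hasFDerivAt_norm_rpow' (α - 1 - 2) hx).const_mul (α - 1)).mul hi).smul
          (hasFDerivAt_id x)))
    have he : (fun z => fderiv ℝ u z (stdE i)) =ᶠ[nhds x] fun z => (fderiv ℝ W ∘ cylMap α) z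
        (‖z‖ ^ (α - 1) • stdE i + ((α - 1) * ‖z‖ ^ (α - 1 - 2) * ⟪z, (stdE i : Euc d)⟫) • id z) := by
      filter_upwards [isOpen_compl_singleton.mem_nhds hx] with z hz using
        fderiv_comp_cylMap hW hz _
    have h2 := ((contDiffAt_of_punctured hu hx).hasFDerivAt_fderiv).clm_apply
      (hasFDerivAt_const (stdE i : Euc d) x)
    have h3 := h2.unique (h1.congr_of_eventuallyEq he)
    have h4 := congrArg (fun L : Euc d →L[ℝ] ℝ => L (stdE i)) h3
    simp only [← hy, ← hA, hB, hC, add_apply, ContinuousLinearMap.comp_apply,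
      ContinuousLinearMap.flip_apply, smul_apply, Function.comp,
      ContinuousLinearMap.smulRight_apply, innerSL_apply_apply, inner_stdE, id,
      ContinuousLinearMap.id_apply, zero_apply, map_zero, zero_add, smul_eq_mul,
      map_add, map_smul, PiLp.single_apply, if_true, Pi.add_apply,
      Pi.smul_apply', Pi.mul_apply] at h4 ⊢
    rw [h4]
    ring
  rw [Finset.sum_congr rfl fun i _ => key i]
  simp_rw [Finset.sum_add_distrib, trace_rank_one, ← Finset.mul_sum, sum_coord_sq, sum_apply_coord]
  simp only [Finset.sum_const, Finset.card_univ, Fintype.card_fin, nsmul_eq_mul]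
  field_simp
  ring

/-! ### The equation for `w` -/

lemma acrit_sub_add_pos {d : ℕ} {a b : ℝ} (hadm : Admissible d a b) : 0 < acrit d - a + b := by
  obtain ⟨⟨hd, hab, -⟩ | ⟨rfl, hab, -⟩, -⟩ := hadm
  · have : (3 : ℝ) ≤ d := by exact_mod_cast hd
    rw [acrit]; linarith
  · rw [acrit]; push_cast; linarith

/-- The equation `-𝓛w = w^(p-1)`, at the image `Φ(x)` of a point `x ≠ 0`. -/
lemma cylL_eq_of_CKN {d : ℕ} {a b : ℝ} {u W : Euc d → ℝ} (hadm : Admissible d a b)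
    (hab : b < a + 1)
    (husol : IsCKNSolution d a b (pCKN d a b) u)
    (hW : IsCylinderRep (alphaCKN d a b) u W) {x : Euc d} (hx : x ≠ 0) :
    cylL (alphaCKN d a b) (nCKN d a b) W (cylMap (alphaCKN d a b) x)
      + W (cylMap (alphaCKN d a b) x) ^ (pCKN d a b - 1) = 0 := by
  have hr : 0 < ‖x‖ := norm_pos_iff.2 hx
  have hD : 0 < acrit d - a + b := acrit_sub_add_pos hadm
  have hc : 0 < acrit d - a := sub_pos.2 hadm.2
  have hs : 0 < 1 + a - b := by linarith
  have hd : (d : ℝ) = 2 * acrit d + 2 := by rw [acrit]; ring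
  have hp : pCKN d a b = d / (acrit d - a + b) := by
    rw [pCKN, show (d : ℝ) - 2 + 2 * (b - a) = 2 * (acrit d - a + b) by rw [acrit]; ring]
    field_simp
  -- The two relations between `α`, `n`, `p` that make the first-order and nonlinear terms match.
  have hcoef : alphaCKN d a b * (nCKN d a b - 2) = 2 * (acrit d - a) := by
    rw [alphaCKN, nCKN, hd]; field_simp; ring
  have hexp : -(b * pCKN d a b) = -(2 * a) + 2 * (alphaCKN d a b - 1) := by
    rw [alphaCKN, hp, hd]; field_simp; ring
  have hu := contDiffAt_of_punctured husol.1 hx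
  have hy := cylMap_ne_zero (alphaCKN d a b) hx
  have heq := husol.2 x hx
  have hux : fderiv ℝ u x x = alphaCKN d a b * ‖x‖ ^ (alphaCKN d a b - 1)
      * fderiv ℝ W (cylMap (alphaCKN d a b) x) x := by
    rw [fderiv_comp_cylMap hW hx, real_inner_self_eq_norm_sq, Real.rpow_sub hr _ 2, Real.rpow_two]
    simp only [map_add, map_smul, smul_eq_mul]
    field_simp
    ring
  rw [divg_weighted _ hx hu, hux, trace_hess_comp_cylMap hW husol.1 hx, hexp, hW.2 x hx,
    ← cylMap, Real.rpow_sub hr _ 2, Real.rpow_two, Real.rpow_add hr,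
    mul_comm 2 (alphaCKN d a b - 1), Real.rpow_mul hr.le _ 2, Real.rpow_two] at heq
  have hny : ‖cylMap (alphaCKN d a b) x‖ = ‖x‖ ^ (alphaCKN d a b - 1) * ‖x‖ := by
    rw [cylMap, norm_smul, Real.norm_of_nonneg (by positivity)]
  rw [cylL_eq _ _ hy (contDiffAt_of_punctured hW.1 hy), hny]
  set y := cylMap (alphaCKN d a b) x with hydef
  have hHy : hess W y y y = (‖x‖ ^ (alphaCKN d a b - 1)) ^ 2 * hess W y x x := by
    have : ∀ H : Euc d →L[ℝ] Euc d →L[ℝ] ℝ, H y y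
        = (‖x‖ ^ (alphaCKN d a b - 1)) ^ 2 * H x x := by
      intro H
      rw [hydef, cylMap]
      simp only [map_smul, smul_apply, smul_eq_mul]
      ring
    exact this _
  have hLy : fderiv ℝ W y y = ‖x‖ ^ (alphaCKN d a b - 1) * fderiv ℝ W y x := by
    have : ∀ L : Euc d →L[ℝ] ℝ, L y = ‖x‖ ^ (alphaCKN d a b - 1) * L x := by
      intro L
      rw [hydef, cylMap, map_smul, smul_eq_mul]
    exact this _
  rw [hHy, hLy]
  have hA : 0 < ‖x‖ ^ (alphaCKN d a b - 1) := by positivity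
  have hE : 0 < ‖x‖ ^ (-(2 * a)) := by positivity
  have hcoef2 : (alphaCKN d a b) ^ 2 * (nCKN d a b - 1) - ((d : ℝ) - 1)
      = (alphaCKN d a b - 1) * (alphaCKN d a b + d - 1) - 2 * a * alphaCKN d a b := by
    linear_combination alphaCKN d a b * hcoef - alphaCKN d a b * hd
  rw [hcoef2]
  -- The equation for `u` at `x` is `|x|^(-2a) |x|^(2(α-1))` times the one for `w` at `Φ(x)`.
  have hne : ‖x‖ ^ (-(2 * a)) * (‖x‖ ^ (alphaCKN d a b - 1)) ^ 2 ≠ 0 := by positivity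
  refine (mul_eq_zero.1 (Eq.trans ?_ heq)).resolve_left hne
  generalize ‖x‖ ^ (alphaCKN d a b - 1) = A at *
  generalize ‖x‖ ^ (-(2 * a)) = E at *
  field_simp
  ring

/-! ### The equation for the pressure -/

/-- Here `n ≠ 1` is needed for `𝐩 ≠ 0`, and `n ≠ 2` for the exponents to be meaningful. -/
lemma cylL_pressure_of_cylL {d : ℕ} {α n : ℝ} {W : Euc d → ℝ} {x : Euc d} (hx : x ≠ 0)
    (hn1 : n ≠ 1) (hn2 : n ≠ 2) (hWc : ContDiffAt ℝ 2 W x) (hWpos : 0 < W x)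
    (hWeq : cylL α n W x + W x ^ ((n + 2) / (n - 2)) = 0) :
    cylL α n (pressure n W) x =
      2 * (n - 1) ^ 2 / (n - 2) * (pressure n W x)⁻¹ +
        n / 2 * cylGradSq α (pressure n W) x * (pressure n W x)⁻¹ := by
  have hn1' : n - 1 ≠ 0 := sub_ne_zero.2 hn1
  have hn2' : n - 2 ≠ 0 := sub_ne_zero.2 hn2
  set q : ℝ := -(2 / (n - 2)) with hq
  have hev : ∀ᶠ y in nhds x, fderiv ℝ (pressure n W) y
      = ((n - 1) * q * W y ^ (q - 1)) • fderiv ℝ W y := by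
    filter_upwards [hWc.eventually (by norm_num), hWc.continuousAt.eventually (lt_mem_nhds hWpos)]
      with y hy hy'
    have h := ((hy.differentiableAt (by norm_num)).hasFDerivAt.rpow_const (p := q)
      (Or.inl (ne_of_gt hy'))).const_mul (n - 1)
    change fderiv ℝ (fun y => (n - 1) * W y ^ q) y = _
    rw [h.fderiv]
    simp only [smul_smul]
    congr 1; ring
  have hPc : ContDiffAt ℝ 2 (pressure n W) x :=
    contDiffAt_const.mul (hWc.rpow_const_of_ne hWpos.ne')
  have hg := hev.self_of_nhds
  have hh : hess (pressure n W) x = ((n - 1) * q * W x ^ (q - 1)) • hess W x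
      + (((n - 1) * q * ((q - 1) * W x ^ (q - 1 - 1))) • fderiv ℝ W x).smulRight
          (fderiv ℝ W x) := by
    have h1 : HasFDerivAt (fun y => (n - 1) * q * W y ^ (q - 1))
        (((n - 1) * q * ((q - 1) * W x ^ (q - 1 - 1))) • fderiv ℝ W x) x := by
      refine (((hWc.differentiableAt (by norm_num)).hasFDerivAt.rpow_const (p := q - 1)
        (Or.inl hWpos.ne')).const_mul ((n - 1) * q)).congr_fderiv ?_
      simp only [smul_smul]
    exact ((h1.smul hWc.hasFDerivAt_fderiv).congr_of_eventuallyEq hev).fderiv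
  have hL : cylL α n (pressure n W) x = (n - 1) * q * W x ^ (q - 1) * cylL α n W x
      + (n - 1) * q * ((q - 1) * W x ^ (q - 1 - 1)) * cylGradSq α W x := by
    rw [cylL_eq α n hx hPc, cylL_eq α n hx hWc, cylGradSq_eq α W hx, hg, hh]
    simp only [add_apply, smul_apply, ContinuousLinearMap.smulRight_apply, smul_eq_mul,
      Finset.sum_add_distrib, mul_assoc, ← Finset.mul_sum]
    have : ∀ i : Fin d, fderiv ℝ W x (stdE i) * fderiv ℝ W x (stdE i)
      = fderiv ℝ W x (stdE i) ^ 2 := fun i => (sq _).symm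
    simp only [this]
    ring
  have hG : cylGradSq α (pressure n W) x
      = ((n - 1) * q * W x ^ (q - 1)) ^ 2 * cylGradSq α W x := by
    rw [cylGradSq_eq α W hx, cylGradSq_eq α _ hx, hg]
    simp only [smul_apply, smul_eq_mul, mul_pow, ← Finset.mul_sum]
    ring
  have hLW : cylL α n W x = -W x ^ ((n + 2) / (n - 2)) := by linarith
  have hP : pressure n W x = (n - 1) * W x ^ q := rfl
  -- The exponents cancel: `q - 1 + (n+2)/(n-2) = -q`.
  have e1 : W x ^ (q - 1) * W x ^ ((n + 2) / (n - 2)) = (W x ^ q)⁻¹ := by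
    rw [← Real.rpow_add hWpos, ← Real.rpow_neg hWpos.le]
    congr 1
    rw [hq]; field_simp; ring
  have e2 : W x ^ (q - 1 - 1) = W x ^ q / W x ^ 2 := by
    rw [sub_sub, one_add_one_eq_two, Real.rpow_sub hWpos, Real.rpow_two]
  have e3 : W x ^ (q - 1) = W x ^ q / W x := Real.rpow_sub_one hWpos.ne' q
  have hQ : 0 < W x ^ q := Real.rpow_pos_of_pos hWpos q
  have e4 : (n - 1) * q * W x ^ (q - 1) * -W x ^ ((n + 2) / (n - 2))
      = -((n - 1) * q) * (W x ^ q)⁻¹ := by rw [← e1]; ring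
  rw [hL, hG, hLW, hP, e4, e2, e3]
  generalize W x ^ q = Q at *
  rw [hq]
  field_simp
  ring

/-! ### The endpoint `b = a + 1` -/

/-- If the second derivative were negative, `t` would also be a local maximum, so `f` would be
locally constant. -/
lemma second_deriv_nonneg_of_isLocalMin {f : ℝ → ℝ} {t : ℝ} (h : IsLocalMin f t)
    (hc : ContinuousAt f t) : 0 ≤ deriv (deriv f) t := by
  by_contra! hneg
  have hmax : IsLocalMax f t := isLocalMax_of_deriv_deriv_neg hneg h.deriv_eq_zero hc
  have hconst : f =ᶠ[nhds t] fun _ => f t := by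
    filter_upwards [h, hmax] with s h1 h2 using le_antisymm h2 h1
  have : deriv (deriv f) t = 0 := by
    rw [hconst.deriv.deriv_eq]; simp
  linarith

lemma hess_nonneg_of_isLocalMin {d : ℕ} {u : Euc d → ℝ} {x : Euc d} (hu : ContDiffAt ℝ 2 u x)
    (h : IsLocalMin u x) (v : Euc d) : 0 ≤ hess u x v v := by
  have hl : ∀ t : ℝ, HasDerivAt (fun t : ℝ => x + t • v) v t := fun t => by
    simpa using ((hasDerivAt_id t).smul_const v).const_add x
  have hl0 : Filter.Tendsto (fun t : ℝ => x + t • v) (nhds 0) (nhds x) := by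
    have := (hl 0).continuousAt.tendsto
    simpa using this
  have hmin : IsLocalMin (fun t : ℝ => u (x + t • v)) 0 := by
    filter_upwards [hl0.eventually h] with t ht
    simpa using ht
  have hd1 : deriv (fun t : ℝ => u (x + t • v)) =ᶠ[nhds 0] fun t => fderiv ℝ u (x + t • v) v := by
    filter_upwards [hl0.eventually (hu.eventually (by norm_num))] with t ht
    exact ((ht.differentiableAt (by norm_num)).hasFDerivAt.comp_hasDerivAt t (hl t)).deriv
  have hx0 : x + (0 : ℝ) • v = x := by simp
  have hd2 : deriv (deriv fun t : ℝ => u (x + t • v)) 0 = hess u x v v := by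
    have h1 : HasFDerivAt (fderiv ℝ u) (hess u x) (x + (0 : ℝ) • v) := by
      rw [hx0]; exact hu.hasFDerivAt_fderiv
    have h2 : HasDerivAt (fun t : ℝ => fderiv ℝ u (x + t • v)) (hess u x v) 0 :=
      HasFDerivAt.comp_hasDerivAt (f := fun t : ℝ => x + t • v) 0 h1 (hl 0)
    have h3 : HasFDerivAt (fun L : Euc d →L[ℝ] ℝ => L v)
        (ContinuousLinearMap.apply ℝ ℝ v) (fderiv ℝ u (x + (0 : ℝ) • v)) :=
      (ContinuousLinearMap.apply ℝ ℝ v).hasFDerivAt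
    have h4 : HasDerivAt (fun t : ℝ => fderiv ℝ u (x + t • v) v) (hess u x v v) 0 :=
      HasFDerivAt.comp_hasDerivAt (f := fun t : ℝ => fderiv ℝ u (x + t • v)) 0 h3 h2
    exact hd1.deriv_eq.trans h4.deriv
  rw [← hd2]
  refine second_deriv_nonneg_of_isLocalMin hmin ?_
  have hc : ContinuousAt u (x + (0 : ℝ) • v) := by rw [hx0]; exact hu.continuousAt
  exact ContinuousAt.comp (g := u) hc (hl 0).continuousAt

/-- A positive solution that is `0`-homogeneous (this is what `α = 0` means) does not exist: at a
minimum point over the unit sphere, hence a local minimum in `ℝ^d`, the equation fails. -/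
lemma no_solution_of_alpha_zero {d : ℕ} (hd : 2 ≤ d) {a b p : ℝ} {u W : Euc d → ℝ}
    (hupos : ∀ x : Euc d, 0 < u x) (husol : IsCKNSolution d a b p u)
    (hW : IsCylinderRep 0 u W) : False := by
  have : Nonempty (Fin d) := ⟨⟨0, by omega⟩⟩
  have hne : (Metric.sphere (0 : Euc d) 1).Nonempty := NormedSpace.sphere_nonempty.2 zero_le_one
  have hsub : ∀ x ∈ Metric.sphere (0 : Euc d) 1, x ≠ 0 := fun x hx => by
    rintro rfl; simp at hx
  obtain ⟨x, hxs, hxmin⟩ := (isCompact_sphere (0 : Euc d) 1).exists_isMinOn hne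
    (husol.1.continuousOn.mono hsub)
  have hx := hsub x hxs
  have hr : 0 < ‖x‖ := norm_pos_iff.2 hx
  have hloc : IsLocalMin u x := by
    filter_upwards [isOpen_compl_singleton.mem_nhds hx] with y hy
    have hy0 : 0 < ‖y‖ := norm_pos_iff.2 hy
    have hn : ‖‖y‖⁻¹ • y‖ = 1 := by
      rw [norm_smul, norm_inv, norm_norm, inv_mul_cancel₀ hy0.ne']
    have hz : ‖y‖⁻¹ • y ≠ 0 := smul_ne_zero (inv_ne_zero hy0.ne') hy
    have h1 : u (‖y‖⁻¹ • y) = u y := by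
      rw [hW.2 _ hz, hW.2 _ hy, hn]
      simp [Real.rpow_neg_one]
    rw [← h1]
    exact hxmin (by simpa using hn)
  have hu := contDiffAt_of_punctured husol.1 hx
  have heq := husol.2 x hx
  rw [divg_weighted _ hx hu, hloc.fderiv_eq_zero] at heq
  have h1 : 0 ≤ ‖x‖ ^ (-(2 * a)) * ∑ i, hess u x (stdE i) (stdE i) :=
    mul_nonneg (by positivity) (Finset.sum_nonneg fun i _ => hess_nonneg_of_isLocalMin hu hloc _)
  have h2 : 0 < ‖x‖ ^ (-(b * p)) * u x ^ (p - 1) :=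
    mul_pos (by positivity) (Real.rpow_pos_of_pos (hupos x) _)
  simp only [zero_apply, mul_zero, add_zero] at heq
  linarith

/-! ### The pressure equation -/

/-- **Lemma (equation for the pressure).** If `u` is a positive solution and
`𝐩 = (n-1) w^{-2/(n-2)}` is the pressure function, then
`𝓛𝐩 = (2(n-1)²/(n-2)) 𝐩⁻¹ + (n/2)|D𝐩|² 𝐩⁻¹` on `(0,∞) × S^{d-1}`. -/
theorem pressure_equation (d : ℕ) (a b : ℝ) (u W : Euc d → ℝ)
    (hadm : Admissible d a b)
    (hupos : ∀ x : Euc d, 0 < u x)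
    (husol : IsCKNSolution d a b (pCKN d a b) u)
    (hW : IsCylinderRep (alphaCKN d a b) u W) :
    ∀ x : Euc d, x ≠ 0 →
      cylL (alphaCKN d a b) (nCKN d a b) (pressure (nCKN d a b) W) x =
        2 * (nCKN d a b - 1) ^ 2 / (nCKN d a b - 2) * (pressure (nCKN d a b) W x)⁻¹ +
          nCKN d a b / 2 * cylGradSq (alphaCKN d a b) (pressure (nCKN d a b) W) x *
            (pressure (nCKN d a b) W x)⁻¹ := by
  intro x hx
  have hd2 : 2 ≤ d := by
    rcases hadm.1 with h | h <;> omega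
  have hb : b ≤ a + 1 := by
    rcases hadm.1 with h | h
    · exact h.2.2
    · exact h.2.2
  rcases hb.eq_or_lt with hb | hb
  · -- Here `α = 0`, so `u` would be `0`-homogeneous, and no such positive solution exists.
    have h0 : alphaCKN d a b = 0 := by
      rw [alphaCKN, show 1 + a - b = 0 by linarith]; simp
    rw [h0] at hW
    exact (no_solution_of_alpha_zero hd2 hupos husol hW).elim
  have hD := acrit_sub_add_pos hadm
  have hs : 0 < 1 + a - b := by linarith
  have hα : alphaCKN d a b ≠ 0 := ne_of_gt
    (div_pos (mul_pos hs (sub_pos.2 hadm.2)) hD)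
  -- `n - 2` is a positive multiple of `a_c - a + b`, hence `n > 2`.
  have hnD : nCKN d a b - 2 = 2 * (acrit d - a + b) / (1 + a - b) := by
    rw [nCKN, acrit]; field_simp; ring
  have hn2 : 0 < nCKN d a b - 2 := by rw [hnD]; positivity
  have hp : pCKN d a b - 1 = (nCKN d a b + 2) / (nCKN d a b - 2) := by
    rw [show nCKN d a b + 2 = (nCKN d a b - 2) + 4 by ring, hnD, pCKN,
      show (d : ℝ) - 2 + 2 * (b - a) = 2 * (acrit d - a + b) by rw [acrit]; ring,
      show (d : ℝ) = 2 * acrit d + 2 by rw [acrit]; ring]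
    field_simp
    ring
  -- `x = Φ(z)` for some `z ≠ 0`, so positivity and the equation for `w` hold at `x`.
  have hz := cylMap_inv hα hx
  have hz0 : cylMap (alphaCKN d a b)⁻¹ x ≠ 0 := cylMap_ne_zero _ hx
  have hWpos : 0 < W x := by
    have := hW.2 _ hz0
    rw [← cylMap, hz] at this
    rw [← this]; exact hupos _
  have hWeq := cylL_eq_of_CKN hadm hb husol hW hz0
  rw [hz, hp] at hWeq
  exact cylL_pressure_of_cylL hx (by linarith) (by linarith)
    (contDiffAt_of_punctured hW.1 hx) hWpos hWeq
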